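/- Let G be a finite connected simple graph and let H₀ be a minimal 1-densest subgraph of G with H₀ ≠ G. Then for every fair tree γ of G, the restriction γ ∩ E(H₀) (the set of edges of γ joining two vertices of H₀) is a fair spanning tree of the graph H₀, i.e., it lies in the support of some fair pmf on the spanning trees of H₀. -/

import Mathlib

open scoped Classical

noncomputable section

variable {V : Type*} [Fintype V] [DecidableEq V]

/-- `T` is (the edge set of) a spanning tree of the vertex-induced subgraph of `G`
on the vertex set `S`: its edges are edges of `G` with both endpoints in `S`,
it is acyclic, and every two vertices of `S` are joined by a path using edges of `T`. -/
def IsSpanningTreeOn (G : SimpleGraph V) (S : Finset V) (T : Finset (Sym2 V)) : Prop :=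
  (↑T : Set (Sym2 V)) ⊆ G.edgeSet ∧ (∀ e ∈ T, ∀ v ∈ e, v ∈ S) ∧
    (SimpleGraph.fromEdgeSet (↑T : Set (Sym2 V))).IsAcyclic ∧
    ∀ u ∈ S, ∀ w ∈ S, (SimpleGraph.fromEdgeSet (↑T : Set (Sym2 V))).Reachable u w

/-- A probability mass function on the spanning trees of the induced subgraph of `G` on `S`. -/
structure TreePMFOn (G : SimpleGraph V) (S : Finset V) where
  toFun : Finset (Sym2 V) → ℝ
  nonneg : ∀ T, 0 ≤ toFun T
  supp : ∀ T, toFun T ≠ 0 → IsSpanningTreeOn G S T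
  sum_one : ∑ T : Finset (Sym2 V), toFun T = 1

/-- Edge probability `η_μ(e)`. -/
def edgeProbOn {G : SimpleGraph V} {S : Finset V} (μ : TreePMFOn G S) (e : Sym2 V) : ℝ :=
  ∑ T : Finset (Sym2 V), if e ∈ T then μ.toFun T else 0

/-- Edges of `G` with both endpoints in `S`. -/
def inducedEdges (G : SimpleGraph V) (S : Finset V) : Finset (Sym2 V) :=
  G.edgeFinset.filter fun e => ∀ v ∈ e, v ∈ S

/-- Variance of the edge probabilities of `μ` over the edges within `S`. -/
def edgeVarOn {G : SimpleGraph V} {S : Finset V} (μ : TreePMFOn G S) : ℝ :=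
  (∑ e ∈ inducedEdges G S, (edgeProbOn μ e) ^ 2) / ((inducedEdges G S).card : ℝ) -
    ((∑ e ∈ inducedEdges G S, edgeProbOn μ e) / ((inducedEdges G S).card : ℝ)) ^ 2

/-- A pmf is fair if it minimizes the variance of the edge probabilities. -/
def IsFairOn {G : SimpleGraph V} {S : Finset V} (μ : TreePMFOn G S) : Prop :=
  ∀ ν : TreePMFOn G S, edgeVarOn μ ≤ edgeVarOn ν

/-- A fair tree: a spanning tree in the support of some fair pmf. -/
def IsFairTreeOn (G : SimpleGraph V) (S : Finset V) (T : Finset (Sym2 V)) : Prop :=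
  ∃ μ : TreePMFOn G S, IsFairOn μ ∧ μ.toFun T ≠ 0

/-- The 1-density `θ(H) = |E(H)|/(|V(H)|-1)` of the induced subgraph on `S`. -/
def density (G : SimpleGraph V) (S : Finset V) : ℝ :=
  ((inducedEdges G S).card : ℝ) / ((S.card : ℝ) - 1)

/-- `S` induces a member of `H(G)`: connected, vertex-induced, with at least one edge. -/
def InH (G : SimpleGraph V) (S : Finset V) : Prop :=
  (inducedEdges G S).Nonempty ∧ (G.induce (↑S : Set V)).Connected

/-- `S` induces a 1-densest subgraph of `G`. -/
def IsDensest (G : SimpleGraph V) (S : Finset V) : Prop :=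
  InH G S ∧ ∀ S' : Finset V, InH G S' → density G S' ≤ density G S

/-- `S` induces a minimal 1-densest subgraph of `G`. -/
def IsMinimalDensest (G : SimpleGraph V) (S : Finset V) : Prop :=
  IsDensest G S ∧ ∀ S' : Finset V, S' ⊆ S → S' ≠ S → ¬ IsDensest G S'

/-- The induced subgraph on `S` is homogeneous: some pmf on its spanning trees
has constant edge probabilities. -/
def IsHomogeneousOn (G : SimpleGraph V) (S : Finset V) : Prop :=
  ∃ μ : TreePMFOn G S, ∃ c : ℝ, ∀ e ∈ inducedEdges G S, edgeProbOn μ e = c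

/-- The induced subgraph on `S` has the strict 1-density property. -/
def StrictDensityOn (G : SimpleGraph V) (S : Finset V) : Prop :=
  ∀ S' : Finset V, S' ⊆ S → InH G S' → S' ≠ S → density G S' < density G S

/-! Let `η` be the edge probabilities of a fair pmf `μ` on the spanning trees of `G`. Moving mass
between two trees shows that `μ` is supported on minimum-weight spanning trees for the weights `η`.
As in Kruskal's algorithm, such a tree restricts to a spanning tree of every connected component `U`
of a sublevel graph `{η ≤ a}`. Averaging over `μ` gives `#U - 1 ≤ a |E(U)|`, and taking for `U` the
component of an edge `e` at the level `a = η e` gives `η e ≥ 1 / θ(U) ≥ 1 / θ(S)` for a densest `S`.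
On the other hand a tree has at most `#S - 1 = |E(S)| / θ(S)` edges within `S`, so
`∑ e ∈ E(S), η e ≤ |E(S)| / θ(S)`. Equality therefore holds throughout: `η` is constant on `E(S)`,
and every tree in the support of `μ` restricts to a spanning tree of `S`. The push-forward of `μ`
under restriction thus has constant edge probabilities, hence variance `0`. -/

lemma nonneg_of_forall_mul_add_sq_mul_nonneg {b c ε : ℝ} (hε : 0 < ε)
    (h : ∀ t, 0 < t → t ≤ ε → 0 ≤ t * b + t ^ 2 * c) : 0 ≤ b := by
  have hlim : Filter.Tendsto (fun t : ℝ => b + t * c) (nhdsWithin 0 (Set.Ioi 0)) (nhds b) := by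
    have : ContinuousWithinAt (fun t : ℝ => b + t * c) (Set.Ioi 0) 0 := by fun_prop
    simpa [ContinuousWithinAt] using this
  refine ge_of_tendsto hlim ?_
  filter_upwards [Ioc_mem_nhdsGT hε] with t ht
  have := h t ht.1 ht.2
  rw [pow_two, mul_assoc, ← mul_add] at this
  exact nonneg_of_mul_nonneg_right this ht.1

section SpanningTrees

open SimpleGraph Finset

variable {α : Type*}

lemma card_edgeSet_add_one_le_of_isAcyclic [Finite α] [Nonempty α] {H : SimpleGraph α}
    (hH : H.IsAcyclic) : Nat.card H.edgeSet + 1 ≤ Nat.card α := by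
  obtain ⟨F, hHF, -, hF⟩ := connected_top.exists_isTree_le_of_le_of_isAcyclic le_top hH
  rw [← (isTree_iff_connected_and_card.1 hF).2]
  exact Nat.add_le_add_right (Nat.card_mono (Set.toFinite _) (edgeSet_mono hHF)) 1

lemma connected_of_isAcyclic_of_card_edgeSet_add_one [Finite α] [Nonempty α] {H : SimpleGraph α}
    (hH : H.IsAcyclic) (hcard : Nat.card H.edgeSet + 1 = Nat.card α) : H.Connected := by
  obtain ⟨F, hHF, -, hF⟩ := connected_top.exists_isTree_le_of_le_of_isAcyclic le_top hH
  have hcardF := (isTree_iff_connected_and_card.1 hF).2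
  have hedges : H.edgeSet = F.edgeSet := by
    refine Set.eq_of_subset_of_ncard_le (edgeSet_mono hHF) ?_
    rw [← Nat.card_coe_set_eq, ← Nat.card_coe_set_eq]
    omega
  exact edgeSet_inj.1 hedges ▸ hF.connected

lemma connected_induce_supp_of_forall_adj_reachable {H K : SimpleGraph α} (hKH : K ≤ H)
    (hadj : ∀ u v, H.Adj u v → K.Reachable u v) (C : H.ConnectedComponent) :
    (K.induce C.supp).Connected := by
  induction C using ConnectedComponent.ind with
  | _ u =>
  have hreach : ∀ v, H.Reachable v u ↔ K.Reachable v u := by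
    refine fun v => ⟨?_, Reachable.mono hKH⟩
    rintro ⟨p⟩
    induction p with
    | nil => rfl
    | cons h _ ih => exact (hadj _ _ h).trans ih
  have hsupp : (H.connectedComponentMk u).supp = (K.connectedComponentMk u).supp := by
    ext v
    simp only [ConnectedComponent.mem_supp_iff, ConnectedComponent.eq, hreach]
  rw [hsupp]
  exact (K.connectedComponentMk u).connected_toSimpleGraph

/-- The edges of `T` with both endpoints in `S`: the restriction `T ∩ E(H)` of an edge set to the
subgraph `H` induced on `S`. -/
def edgesWithin (T : Finset (Sym2 α)) (S : Finset α) : Finset (Sym2 α) :=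
  {e ∈ T | ∀ v ∈ e, v ∈ S}

lemma mem_edgesWithin {T : Finset (Sym2 α)} {S : Finset α} {e : Sym2 α} :
    e ∈ edgesWithin T S ↔ e ∈ T ∧ ∀ v ∈ e, v ∈ S :=
  mem_filter

lemma edgesWithin_eq_self {T : Finset (Sym2 α)} {S : Finset α} (h : ∀ e ∈ T, ∀ v ∈ e, v ∈ S) :
    edgesWithin T S = T :=
  filter_true_of_mem h

lemma fromEdgeSet_edgesWithin_adj {T : Finset (Sym2 α)} {S : Finset α} {u v : α} :
    (fromEdgeSet (edgesWithin T S : Set (Sym2 α))).Adj u v ↔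
      (fromEdgeSet (T : Set (Sym2 α))).Adj u v ∧ u ∈ S ∧ v ∈ S := by
  simp only [fromEdgeSet_adj, mem_coe, mem_edgesWithin, Sym2.mem_iff, forall_eq_or_imp, forall_eq]
  tauto

lemma card_edgeSet_induce_fromEdgeSet {T : Finset (Sym2 α)} (hT : ∀ e ∈ T, ¬ e.IsDiag)
    (S : Finset α) :
    Nat.card ((fromEdgeSet (T : Set (Sym2 α))).induce (S : Set α)).edgeSet =
      #(edgesWithin T S) := by
  have himage : Sym2.map Subtype.val ''
      ((fromEdgeSet (T : Set (Sym2 α))).induce (S : Set α)).edgeSet = edgesWithin T S := by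
    ext e
    constructor
    · rintro ⟨⟨u, v⟩, huv, rfl⟩
      exact (fromEdgeSet_edgesWithin_adj.2 ⟨huv, u.2, v.2⟩).1
    · induction e with
      | _ u v =>
      intro huv
      obtain ⟨hmem, hS⟩ := mem_edgesWithin.1 huv
      exact ⟨s(⟨u, hS u (by simp)⟩, ⟨v, hS v (by simp)⟩), ⟨hmem, hT _ hmem⟩, rfl⟩
  rw [Nat.card_coe_set_eq, ← Set.ncard_image_of_injective _ (Sym2.map.injective
    Subtype.val_injective), himage, Set.ncard_coe_finset]

namespace IsSpanningTreeOn

variable {G : SimpleGraph α} {R S : Finset α} {T : Finset (Sym2 α)}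

lemma not_isDiag (hT : IsSpanningTreeOn G S T) {e : Sym2 α} (he : e ∈ T) : ¬ e.IsDiag :=
  G.not_isDiag_of_mem_edgeSet (hT.1 he)

lemma supp_connectedComponentMk (hT : IsSpanningTreeOn G S T) {u : α} (hu : u ∈ S) :
    ((fromEdgeSet (T : Set (Sym2 α))).connectedComponentMk u).supp = S := by
  ext v
  simp only [ConnectedComponent.mem_supp_iff, ConnectedComponent.eq, mem_coe]
  refine ⟨fun hvu => ?_, fun hv => hT.2.2.2 v hv u hu⟩
  rcases eq_or_ne v u with rfl | hne
  · exact hu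
  · obtain ⟨w, hvw⟩ := mem_support_of_reachable hne hvu
    exact hT.2.1 _ hvw.1 v (by simp)

lemma isTree_induce (hT : IsSpanningTreeOn G S T) (hS : S.Nonempty) :
    ((fromEdgeSet (T : Set (Sym2 α))).induce (S : Set α)).IsTree := by
  obtain ⟨u, hu⟩ := hS
  refine ⟨?_, hT.2.2.1.induce _⟩
  rw [← hT.supp_connectedComponentMk hu]
  exact ConnectedComponent.connected_toSimpleGraph _

lemma card_add_one (hT : IsSpanningTreeOn G S T) (hS : S.Nonempty) : #T + 1 = #S := by
  have h := (isTree_iff_connected_and_card.1 (hT.isTree_induce hS)).2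
  rw [card_edgeSet_induce_fromEdgeSet (fun _ => hT.not_isDiag), edgesWithin_eq_self hT.2.1] at h
  simpa using h

lemma card_edgesWithin_add_one_le (hT : IsSpanningTreeOn G R T) (hS : S.Nonempty) :
    #(edgesWithin T S) + 1 ≤ #S := by
  have : Nonempty (S : Set α) := hS.to_subtype
  have h := card_edgeSet_add_one_le_of_isAcyclic (hT.2.2.1.induce (S : Set α))
  rw [card_edgeSet_induce_fromEdgeSet fun _ => hT.not_isDiag] at h
  simpa using h

lemma edgesWithin_of_card_add_one (hT : IsSpanningTreeOn G R T)
    (hcard : #(edgesWithin T S) + 1 = #S) : IsSpanningTreeOn G S (edgesWithin T S) := by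
  have hS : S.Nonempty := card_pos.1 (by omega)
  have : Nonempty (S : Set α) := hS.to_subtype
  have hconn : ((fromEdgeSet (T : Set (Sym2 α))).induce (S : Set α)).Connected := by
    refine connected_of_isAcyclic_of_card_edgeSet_add_one (hT.2.2.1.induce _) ?_
    rw [card_edgeSet_induce_fromEdgeSet fun _ => hT.not_isDiag]
    simpa using hcard
  let inclusion : (fromEdgeSet (T : Set (Sym2 α))).induce (S : Set α) →g
      fromEdgeSet (edgesWithin T S : Set (Sym2 α)) :=
    ⟨Subtype.val, fun {u v} huv => fromEdgeSet_edgesWithin_adj.2 ⟨huv, u.2, v.2⟩⟩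
  refine ⟨fun e he => hT.1 (mem_edgesWithin.1 he).1, fun e he => (mem_edgesWithin.1 he).2,
    hT.2.2.1.anti fun u v huv => (fromEdgeSet_edgesWithin_adj.1 huv).1, fun u hu v hv => ?_⟩
  exact (hconn.preconnected ⟨u, hu⟩ ⟨v, hv⟩).map inclusion

end IsSpanningTreeOn

lemma exists_isSpanningTreeOn_of_isAcyclic_subset {G : SimpleGraph α} {S : Finset α}
    {F K : Finset (Sym2 α)} (hFK : F ⊆ K) (hF : (fromEdgeSet (F : Set (Sym2 α))).IsAcyclic)
    (hKG : (K : Set (Sym2 α)) ⊆ G.edgeSet) (hKS : ∀ e ∈ K, ∀ v ∈ e, v ∈ S)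
    (hK : ∀ u ∈ S, ∀ v ∈ S, (fromEdgeSet (K : Set (Sym2 α))).Reachable u v) :
    ∃ T, F ⊆ T ∧ T ⊆ K ∧ IsSpanningTreeOn G S T := by
  obtain ⟨H, hFH, hHK, hH, hreach⟩ := exists_isAcyclic_reachable_eq_le_of_le_of_isAcyclic
    (fromEdgeSet_mono (coe_subset.2 hFK)) hF
  have hHK' : H.edgeSet ⊆ K := fun e he => (edgeSet_fromEdgeSet _ ▸ edgeSet_mono hHK he).1
  obtain ⟨T, hT⟩ := (K.finite_toSet.subset hHK').exists_finset_coe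
  have hTK : T ⊆ K := coe_subset.1 (hT ▸ hHK')
  have hTH : fromEdgeSet (T : Set (Sym2 α)) = H := by rw [hT, fromEdgeSet_edgeSet]
  refine ⟨T, fun e he => ?_, hTK, fun e he => hKG (hTK he), fun e he => hKS e (hTK he),
    hTH ▸ hH, fun u hu v hv => ?_⟩
  · rw [← mem_coe, hT]
    refine edgeSet_mono hFH ?_
    simpa [he] using G.not_isDiag_of_mem_edgeSet (hKG (hFK he))
  · rw [hTH, hreach]
    exact hK u hu v hv

/-- Extend the forest formed by `s(u, v)` and the `p`-edges of `T` to a spanning tree within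
`insert s(u, v) T`; counting edges shows that exactly one edge of `T` is lost. -/
lemma IsSpanningTreeOn.exists_exchange [DecidableEq α] {G : SimpleGraph α} {S : Finset α}
    {T : Finset (Sym2 α)} (hT : IsSpanningTreeOn G S T) {u v : α} (huv : G.Adj u v)
    (hu : u ∈ S) (hv : v ∈ S) {p : Sym2 α → Prop} (hp : p s(u, v))
    (hsep : ¬ (fromEdgeSet {e | e ∈ T ∧ p e}).Reachable u v) :
    ∃ f ∈ T, ¬ p f ∧ s(u, v) ∉ T ∧ IsSpanningTreeOn G S (insert s(u, v) (T.erase f)) := by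
  have huvT : s(u, v) ∉ T := fun h =>
    hsep (Adj.reachable ((fromEdgeSet_adj _).2 ⟨⟨h, hp⟩, huv.ne⟩))
  have hle : fromEdgeSet {e | e ∈ T ∧ p e} ≤ fromEdgeSet (T : Set (Sym2 α)) :=
    fromEdgeSet_mono fun _ he => he.1
  have hacyclic : (fromEdgeSet
      ((insert s(u, v) {e ∈ T | p e} : Finset (Sym2 α)) : Set (Sym2 α))).IsAcyclic := by
    have h := (hT.2.2.1.anti hle).sup_edge_of_not_reachable hsep
    rwa [edge, ← fromEdgeSet_union, Set.union_comm, Set.singleton_union, ← coe_filter,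
      ← coe_insert] at h
  obtain ⟨T', hsub, hT'sub, hT'⟩ := exists_isSpanningTreeOn_of_isAcyclic_subset
    (insert_subset_insert s(u, v) (filter_subset p T)) hacyclic
    (by simpa [Set.insert_subset_iff] using ⟨huv, hT.1⟩)
    (by simpa [hu, hv] using hT.2.1)
    fun x hx y hy => (hT.2.2.2 x hx y hy).mono (fromEdgeSet_mono (by simp))
  obtain ⟨huvT', hpT'⟩ := insert_subset_iff.1 hsub
  obtain ⟨f, hfT', hf⟩ : ∃ f ∉ T', insert f T' = insert s(u, v) T := by
    refine exists_eq_insert_iff.2 ⟨hT'sub, ?_⟩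
    rw [card_insert_of_notMem huvT, hT'.card_add_one ⟨u, hu⟩, hT.card_add_one ⟨u, hu⟩]
  have hfuv : f ≠ s(u, v) := fun h => hfT' (h ▸ huvT')
  have hfT : f ∈ T := (mem_insert.1 (hf ▸ mem_insert_self f T')).resolve_left hfuv
  refine ⟨f, hfT, fun hpf => hfT' (hpT' (mem_filter.2 ⟨hfT, hpf⟩)), huvT, ?_⟩
  rwa [← erase_insert_of_ne hfuv.symm, ← hf, erase_insert hfT']

/-- `T` is a spanning tree of the subgraph of `G` induced on `S` of least total weight with respect
to the edge weights `w`. -/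
def IsMinWeightTreeOn {M : Type*} [AddCommMonoid M] [LE M] (G : SimpleGraph α) (S : Finset α)
    (w : Sym2 α → M) (T : Finset (Sym2 α)) : Prop :=
  IsSpanningTreeOn G S T ∧ ∀ T', IsSpanningTreeOn G S T' → ∑ e ∈ T, w e ≤ ∑ e ∈ T', w e

/-- The subgraph of the induced subgraph on `S` formed by the edges of weight at most `a`. -/
def sublevelGraph {M : Type*} [LE M] (G : SimpleGraph α) (S : Finset α) (w : Sym2 α → M) (a : M) :
    SimpleGraph α :=
  fromEdgeSet {e | e ∈ G.edgeSet ∧ (∀ v ∈ e, v ∈ S) ∧ w e ≤ a}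

lemma sublevelGraph_adj {M : Type*} [LE M] {G : SimpleGraph α} {S : Finset α} {w : Sym2 α → M}
    {a : M} {u v : α} :
    (sublevelGraph G S w a).Adj u v ↔ G.Adj u v ∧ u ∈ S ∧ v ∈ S ∧ w s(u, v) ≤ a := by
  simp only [sublevelGraph, fromEdgeSet_adj, Set.mem_ofPred_eq, mem_edgeSet, Sym2.mem_iff,
    forall_eq_or_imp, forall_eq]
  grind [Adj.ne]

lemma sublevelGraph_le {M : Type*} [LE M] {G : SimpleGraph α} {S : Finset α} {w : Sym2 α → M}
    {a : M} : sublevelGraph G S w a ≤ G :=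
  fun _ _ h => (sublevelGraph_adj.1 h).1

section MinWeight

variable {M : Type*} [AddCommMonoid M] [LinearOrder M] [IsOrderedCancelAddMonoid M]
  {G : SimpleGraph α} {S : Finset α} {w : Sym2 α → M} {T : Finset (Sym2 α)} {a : M}

lemma IsMinWeightTreeOn.reachable_of_adj_sublevelGraph (hT : IsMinWeightTreeOn G S w T) {u v : α}
    (h : (sublevelGraph G S w a).Adj u v) :
    (fromEdgeSet {e | e ∈ T ∧ w e ≤ a}).Reachable u v := by
  obtain ⟨huv, hu, hv, hwa⟩ := sublevelGraph_adj.1 h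
  by_contra hsep
  obtain ⟨f, hfT, hfa, huvT, hT'⟩ := hT.1.exists_exchange huv hu hv hwa hsep
  refine (hT.2 _ hT').not_gt ?_
  calc ∑ e ∈ insert s(u, v) (T.erase f), w e
      = w s(u, v) + ∑ e ∈ T.erase f, w e := sum_insert fun h => huvT (mem_of_mem_erase h)
    _ < w f + ∑ e ∈ T.erase f, w e := by gcongr; exact hwa.trans_lt (not_le.1 hfa)
    _ = ∑ e ∈ T, w e := add_sum_erase T w hfT

lemma IsMinWeightTreeOn.card_le_of_coe_eq_supp (hT : IsMinWeightTreeOn G S w T)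
    {C : (sublevelGraph G S w a).ConnectedComponent} {U : Finset α} (hU : (U : Set α) = C.supp) :
    #U ≤ #(edgesWithin {e ∈ T | w e ≤ a} U) + 1 := by
  have hle : fromEdgeSet {e | e ∈ T ∧ w e ≤ a} ≤ sublevelGraph G S w a :=
    fromEdgeSet_mono fun e he => ⟨hT.1.1 he.1, hT.1.2.1 e he.1, he.2⟩
  have hconn := connected_induce_supp_of_forall_adj_reachable hle
    (fun _ _ => hT.reachable_of_adj_sublevelGraph) C
  rw [← hU, ← coe_filter] at hconn
  have h := hconn.card_vert_le_card_edgeSet_add_one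
  rw [card_edgeSet_induce_fromEdgeSet fun e he => hT.1.not_isDiag (mem_filter.1 he).1] at h
  simpa using h

end MinWeight

end SpanningTrees

section EdgeProbabilities

open SimpleGraph Finset

variable {α : Type*} [Fintype α] {G : SimpleGraph α} {R S : Finset α}

namespace TreePMFOn

/-- The expectation of the random variable `f` under the pmf `μ` on spanning trees. -/
def expect (μ : TreePMFOn G S) (f : Finset (Sym2 α) → ℝ) : ℝ :=
  ∑ T, μ.toFun T * f T

lemma expect_const (μ : TreePMFOn G S) (c : ℝ) : μ.expect (fun _ => c) = c := by
  rw [expect, ← sum_mul, μ.sum_one, one_mul]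

lemma expect_congr (μ : TreePMFOn G S) {f g : Finset (Sym2 α) → ℝ}
    (h : ∀ T, μ.toFun T ≠ 0 → f T = g T) : μ.expect f = μ.expect g :=
  sum_congr rfl fun T _ => by
    by_cases hT : μ.toFun T = 0
    · simp only [hT, zero_mul]
    · rw [h T hT]

lemma toFun_mul_le_toFun_mul (μ : TreePMFOn G S) {f g : Finset (Sym2 α) → ℝ}
    (h : ∀ T, μ.toFun T ≠ 0 → f T ≤ g T) (T : Finset (Sym2 α)) :
    μ.toFun T * f T ≤ μ.toFun T * g T := by
  by_cases hT : μ.toFun T = 0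
  · simp only [hT, zero_mul, le_refl]
  · exact mul_le_mul_of_nonneg_left (h T hT) (μ.nonneg T)

lemma expect_mono (μ : TreePMFOn G S) {f g : Finset (Sym2 α) → ℝ}
    (h : ∀ T, μ.toFun T ≠ 0 → f T ≤ g T) : μ.expect f ≤ μ.expect g :=
  sum_le_sum fun T _ => μ.toFun_mul_le_toFun_mul h T

lemma eq_of_expect_eq (μ : TreePMFOn G S) {f g : Finset (Sym2 α) → ℝ}
    (hle : ∀ T, μ.toFun T ≠ 0 → f T ≤ g T) (heq : μ.expect f = μ.expect g)
    {T : Finset (Sym2 α)} (hT : μ.toFun T ≠ 0) : f T = g T :=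
  mul_left_cancel₀ hT ((sum_eq_sum_iff_of_le fun T _ => μ.toFun_mul_le_toFun_mul hle T).1 heq T
    (mem_univ T))

/-- The pmf obtained from `μ` by moving mass `t` from `T` to the spanning tree `T'`. -/
def transfer (μ : TreePMFOn G S) (T : Finset (Sym2 α)) {T' : Finset (Sym2 α)}
    (hT' : IsSpanningTreeOn G S T') {t : ℝ} (ht : 0 ≤ t) (htT : t ≤ μ.toFun T) :
    TreePMFOn G S where
  toFun := μ.toFun + Pi.single T' t - Pi.single T t
  nonneg Q := by
    simp only [Pi.add_apply, Pi.sub_apply, Pi.single_apply]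
    grind [μ.nonneg Q]
  supp Q hQ := by
    simp only [Pi.add_apply, Pi.sub_apply, Pi.single_apply] at hQ
    grind [μ.supp Q]
  sum_one := by
    simp [sum_add_distrib, sum_sub_distrib, μ.sum_one]

lemma expect_transfer (μ : TreePMFOn G S) {T T' : Finset (Sym2 α)}
    (hT' : IsSpanningTreeOn G S T') {t : ℝ} (ht : 0 ≤ t) (htT : t ≤ μ.toFun T)
    (f : Finset (Sym2 α) → ℝ) :
    (μ.transfer T hT' ht htT).expect f = μ.expect f + t * (f T' - f T) := by
  simp [expect, transfer, add_mul, sub_mul, sum_add_distrib, sum_sub_distrib, Pi.single_apply]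
  ring

/-- The push-forward of `μ` along a map `r` that sends the support of `μ` to spanning trees. -/
def map {β : Type*} [Fintype β] {H : SimpleGraph β} {U : Finset β} (μ : TreePMFOn G S)
    (r : Finset (Sym2 α) → Finset (Sym2 β))
    (hr : ∀ T, μ.toFun T ≠ 0 → IsSpanningTreeOn H U (r T)) : TreePMFOn H U where
  toFun T' := ∑ T with r T = T', μ.toFun T
  nonneg _ := sum_nonneg fun T _ => μ.nonneg T
  supp T' h := by
    obtain ⟨T, hT, hμT⟩ := exists_ne_zero_of_sum_ne_zero h
    exact (mem_filter.1 hT).2 ▸ hr T hμT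
  sum_one := by rw [sum_fiberwise, μ.sum_one]

section Map

variable {β : Type*} [Fintype β] {H : SimpleGraph β} {U : Finset β} (μ : TreePMFOn G S)
  {r : Finset (Sym2 α) → Finset (Sym2 β)} (hr : ∀ T, μ.toFun T ≠ 0 → IsSpanningTreeOn H U (r T))

lemma expect_map (f : Finset (Sym2 β) → ℝ) :
    (μ.map r hr).expect f = μ.expect fun T => f (r T) := by
  simp only [expect, map, sum_mul]
  rw [← sum_fiberwise univ r]
  refine sum_congr rfl fun T' _ => sum_congr rfl fun T hT => ?_
  rw [(mem_filter.1 hT).2]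

lemma toFun_le_toFun_map (T : Finset (Sym2 α)) : μ.toFun T ≤ (μ.map r hr).toFun (r T) :=
  single_le_sum (f := μ.toFun) (fun T _ => μ.nonneg T) (by simp)

end Map

end TreePMFOn

variable [DecidableEq α]

lemma mem_inducedEdges {e : Sym2 α} :
    e ∈ inducedEdges G S ↔ e ∈ G.edgeSet ∧ ∀ v ∈ e, v ∈ S := by
  simp only [inducedEdges, mem_filter, mem_edgeFinset]

lemma IsSpanningTreeOn.subset_inducedEdges {T : Finset (Sym2 α)} (hT : IsSpanningTreeOn G S T) :
    T ⊆ inducedEdges G S :=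
  fun e he => mem_inducedEdges.2 ⟨hT.1 he, hT.2.1 e he⟩

lemma filter_mem_inducedEdges {T : Finset (Sym2 α)} (hT : (T : Set (Sym2 α)) ⊆ G.edgeSet) :
    {e ∈ inducedEdges G S | e ∈ T} = edgesWithin T S := by
  ext e
  rw [mem_filter, mem_inducedEdges, mem_edgesWithin]
  exact ⟨fun h => ⟨h.2, h.1.2⟩, fun h => ⟨⟨hT h.1, h.2⟩, h.1⟩⟩

lemma edgeProbOn_eq_expect (μ : TreePMFOn G S) (e : Sym2 α) :
    edgeProbOn μ e = μ.expect fun T => if e ∈ T then 1 else 0 := by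
  simp only [edgeProbOn, TreePMFOn.expect, mul_ite, mul_one, mul_zero]

lemma edgeProbOn_nonneg (μ : TreePMFOn G S) (e : Sym2 α) : 0 ≤ edgeProbOn μ e :=
  sum_nonneg fun T _ => by split_ifs <;> simp [μ.nonneg T]

lemma sum_edgeProbOn (μ : TreePMFOn G S) (F : Finset (Sym2 α)) :
    ∑ e ∈ F, edgeProbOn μ e = μ.expect fun T => #{e ∈ F | e ∈ T} := by
  simp only [edgeProbOn_eq_expect, TreePMFOn.expect]
  rw [sum_comm]
  simp only [← mul_sum, sum_boole]

lemma sum_edgeProbOn_inducedEdges (μ : TreePMFOn G R) (S : Finset α) :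
    ∑ e ∈ inducedEdges G S, edgeProbOn μ e = μ.expect fun T => #(edgesWithin T S) := by
  rw [sum_edgeProbOn]
  exact μ.expect_congr fun T hT => by rw [filter_mem_inducedEdges (μ.supp T hT).1]

lemma sum_edgeProbOn_inducedEdges_le (μ : TreePMFOn G R) (hS : S.Nonempty) :
    ∑ e ∈ inducedEdges G S, edgeProbOn μ e ≤ #S - 1 := by
  rw [sum_edgeProbOn_inducedEdges, ← μ.expect_const (#S - 1)]
  refine μ.expect_mono fun T hT => le_sub_iff_add_le.2 ?_
  exact_mod_cast (μ.supp T hT).card_edgesWithin_add_one_le hS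

lemma isSpanningTreeOn_edgesWithin_of_sum_edgeProbOn_eq (μ : TreePMFOn G R) (hS : S.Nonempty)
    (hsum : ∑ e ∈ inducedEdges G S, edgeProbOn μ e = #S - 1) {T : Finset (Sym2 α)}
    (hT : μ.toFun T ≠ 0) : IsSpanningTreeOn G S (edgesWithin T S) := by
  rw [sum_edgeProbOn_inducedEdges, ← μ.expect_const (#S - 1)] at hsum
  refine (μ.supp T hT).edgesWithin_of_card_add_one ?_
  have hcard := μ.eq_of_expect_eq (fun T hT => le_sub_iff_add_le.2 ?_) hsum hT
  · exact_mod_cast eq_sub_iff_add_eq.1 hcard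
  · exact_mod_cast (μ.supp T hT).card_edgesWithin_add_one_le hS

lemma sum_edgeProbOn_eq_card_sub_one (μ : TreePMFOn G S) (hS : S.Nonempty) :
    ∑ e ∈ inducedEdges G S, edgeProbOn μ e = #S - 1 := by
  rw [sum_edgeProbOn_inducedEdges, ← μ.expect_const (#S - 1)]
  refine μ.expect_congr fun T hT => eq_sub_iff_add_eq.2 ?_
  rw [edgesWithin_eq_self (μ.supp T hT).2.1]
  exact_mod_cast (μ.supp T hT).card_add_one hS

lemma edgeVarOn_le_edgeVarOn_iff (μ ν : TreePMFOn G S) :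
    edgeVarOn μ ≤ edgeVarOn ν ↔
      ∑ e ∈ inducedEdges G S, edgeProbOn μ e ^ 2 ≤ ∑ e ∈ inducedEdges G S, edgeProbOn ν e ^ 2 := by
  rcases (inducedEdges G S).eq_empty_or_nonempty with hE | hE
  · simp only [edgeVarOn, hE, sum_empty, le_refl]
  have hS : S.Nonempty := by
    obtain ⟨e, he⟩ := hE
    exact ⟨_, (mem_inducedEdges.1 he).2 _ e.out_fst_mem⟩
  have hcard : (0 : ℝ) < #(inducedEdges G S) := by exact_mod_cast hE.card_pos
  rw [edgeVarOn, edgeVarOn, sum_edgeProbOn_eq_card_sub_one μ hS,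
    sum_edgeProbOn_eq_card_sub_one ν hS, sub_le_sub_iff_right, div_le_div_iff_of_pos_right hcard]

lemma edgeVarOn_nonneg (μ : TreePMFOn G S) : 0 ≤ edgeVarOn μ :=
  sub_nonneg.2 sum_div_card_sq_le_sum_sq_div_card

lemma isFairOn_of_edgeProbOn_eq_const {μ : TreePMFOn G S} {c : ℝ}
    (h : ∀ e ∈ inducedEdges G S, edgeProbOn μ e = c) : IsFairOn μ := by
  intro ν
  refine le_trans (le_of_eq ?_) (edgeVarOn_nonneg ν)
  rw [edgeVarOn, sum_congr rfl h, sum_congr rfl fun e he => by rw [h e he], sum_const, sum_const]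
  rcases eq_or_ne (#(inducedEdges G S) : ℝ) 0 with h0 | h0
  · simp [h0]
  · rw [nsmul_eq_mul, nsmul_eq_mul, mul_div_cancel_left₀ _ h0, mul_div_cancel_left₀ _ h0, sub_self]

lemma edgeProbOn_transfer (μ : TreePMFOn G S) {T T' : Finset (Sym2 α)}
    (hT' : IsSpanningTreeOn G S T') {t : ℝ} (ht : 0 ≤ t) (htT : t ≤ μ.toFun T) (e : Sym2 α) :
    edgeProbOn (μ.transfer T hT' ht htT) e =
      edgeProbOn μ e + t * ((if e ∈ T' then 1 else 0) - (if e ∈ T then 1 else 0)) := by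
  simp only [edgeProbOn_eq_expect, TreePMFOn.expect_transfer]

/-- Moving a small mass `t` from `T` to `T'` changes `∑ η²` by
`2t (∑ e ∈ T', η e - ∑ e ∈ T, η e) + O(t²)`. -/
lemma IsFairOn.isMinWeightTreeOn {μ : TreePMFOn G S} (hμ : IsFairOn μ) {T : Finset (Sym2 α)}
    (hT : μ.toFun T ≠ 0) : IsMinWeightTreeOn G S (edgeProbOn μ) T := by
  refine ⟨μ.supp T hT, fun T' hT' => ?_⟩
  let d (e : Sym2 α) : ℝ := (if e ∈ T' then 1 else 0) - (if e ∈ T then 1 else 0)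
  have hfirst : ∑ e ∈ inducedEdges G S, edgeProbOn μ e * d e =
      ∑ e ∈ T', edgeProbOn μ e - ∑ e ∈ T, edgeProbOn μ e := by
    simp only [d, mul_sub, mul_ite, mul_one, mul_zero, sum_sub_distrib, sum_ite_mem,
      inter_eq_right.2 hT'.subset_inducedEdges,
      inter_eq_right.2 (μ.supp T hT).subset_inducedEdges]
  rw [← sub_nonneg, ← hfirst]
  refine nonneg_of_mul_nonneg_right
    (nonneg_of_forall_mul_add_sq_mul_nonneg ((μ.nonneg T).lt_of_ne' hT)
      (c := ∑ e ∈ inducedEdges G S, d e ^ 2) fun t ht htT => ?_) (zero_lt_two' ℝ)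
  have hfair := (edgeVarOn_le_edgeVarOn_iff _ _).1 (hμ (μ.transfer T hT' ht.le htT))
  calc 0 ≤ ∑ e ∈ inducedEdges G S, (edgeProbOn μ e + t * d e) ^ 2 -
        ∑ e ∈ inducedEdges G S, edgeProbOn μ e ^ 2 := by
        simpa only [edgeProbOn_transfer, sub_nonneg] using hfair
    _ = _ := by
        simp only [mul_sum, ← sum_sub_distrib, ← sum_add_distrib]
        exact sum_congr rfl fun e _ => by ring

end EdgeProbabilities

section Densest

open SimpleGraph Finset

variable {α : Type*} [Fintype α] [DecidableEq α] {G : SimpleGraph α} {R S : Finset α}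

lemma InH.one_lt_card (hS : InH G S) : 1 < #S := by
  obtain ⟨⟨u, v⟩, he⟩ := hS.1
  obtain ⟨huv, hmem⟩ := mem_inducedEdges.1 he
  exact Finset.one_lt_card.2 ⟨u, hmem u (by simp), v, hmem v (by simp), G.ne_of_adj huv⟩

lemma InH.card_sub_one_pos (hS : InH G S) : (0 : ℝ) < #S - 1 :=
  sub_pos.2 (by exact_mod_cast hS.one_lt_card)

lemma InH.density_pos (hS : InH G S) : 0 < density G S :=
  div_pos (by exact_mod_cast hS.1.card_pos) hS.card_sub_one_pos

lemma InH.density_mul_card_sub_one (hS : InH G S) :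
    density G S * (#S - 1) = #(inducedEdges G S) :=
  div_mul_cancel₀ _ hS.card_sub_one_pos.ne'

lemma IsFairOn.card_sub_one_le {μ : TreePMFOn G S} (hμ : IsFairOn μ) {a : ℝ} (ha : 0 ≤ a)
    {C : (sublevelGraph G S (edgeProbOn μ) a).ConnectedComponent} {U : Finset α}
    (hU : (U : Set α) = C.supp) : (#U - 1 : ℝ) ≤ a * #(inducedEdges G U) := by
  let B := {f ∈ inducedEdges G U | edgeProbOn μ f ≤ a}
  have hinter (T : Finset (Sym2 α)) (hT : IsSpanningTreeOn G S T) :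
      edgesWithin {f ∈ T | edgeProbOn μ f ≤ a} U = {f ∈ B | f ∈ T} := by
    rw [filter_comm, filter_mem_inducedEdges hT.1, edgesWithin, edgesWithin, filter_comm]
  calc (#U - 1 : ℝ)
      = μ.expect fun _ => (#U - 1 : ℝ) := (μ.expect_const _).symm
    _ ≤ μ.expect fun T => #{f ∈ B | f ∈ T} := by
        refine μ.expect_mono fun T hT => sub_le_iff_le_add.2 ?_
        rw [← hinter T (μ.supp T hT)]
        exact_mod_cast (hμ.isMinWeightTreeOn hT).card_le_of_coe_eq_supp hU
    _ = ∑ f ∈ B, edgeProbOn μ f := (sum_edgeProbOn μ B).symm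
    _ ≤ #B * a := by
        simpa using sum_le_card_nsmul B _ a fun f hf => (mem_filter.1 hf).2
    _ ≤ a * #(inducedEdges G U) := by
        rw [mul_comm]
        gcongr
        exact filter_subset _ _

lemma IsFairOn.exists_inH_one_le_edgeProbOn_mul_density {μ : TreePMFOn G S} (hμ : IsFairOn μ)
    {e : Sym2 α} (he : e ∈ inducedEdges G S) :
    ∃ U, InH G U ∧ 1 ≤ edgeProbOn μ e * density G U := by
  set a := edgeProbOn μ e with ha
  obtain ⟨u, v⟩ := e
  obtain ⟨huv, hmem⟩ := mem_inducedEdges.1 he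
  have hsub : (sublevelGraph G S (edgeProbOn μ) a).Adj u v :=
    sublevelGraph_adj.2 ⟨huv, hmem u (by simp), hmem v (by simp), ha.ge⟩
  set C := (sublevelGraph G S (edgeProbOn μ) a).connectedComponentMk u
  obtain ⟨U, hU⟩ := C.supp.toFinite.exists_finset_coe
  have huU : u ∈ U := by rw [← mem_coe, hU]; rfl
  have hvU : v ∈ U := by rw [← mem_coe, hU]; exact ConnectedComponent.sound hsub.reachable.symm
  have hInH : InH G U := by
    refine ⟨⟨s(u, v), mem_inducedEdges.2 ⟨huv, by simp [huU, hvU]⟩⟩, ?_⟩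
    rw [hU]
    exact C.connected_toSimpleGraph.mono (comap_monotone _ sublevelGraph_le)
  refine ⟨U, hInH, ?_⟩
  rw [density, ← mul_div_assoc, one_le_div hInH.card_sub_one_pos]
  exact hμ.card_sub_one_le (edgeProbOn_nonneg μ _) hU

lemma IsDensest.one_le_edgeProbOn_mul_density (hS : IsDensest G S) {μ : TreePMFOn G R}
    (hμ : IsFairOn μ) {e : Sym2 α} (he : e ∈ inducedEdges G R) :
    1 ≤ edgeProbOn μ e * density G S := by
  obtain ⟨U, hU, hone⟩ := hμ.exists_inH_one_le_edgeProbOn_mul_density he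
  exact hone.trans (mul_le_mul_of_nonneg_left (hS.2 U hU) (edgeProbOn_nonneg μ e))

lemma inducedEdges_mono (hSR : S ⊆ R) : inducedEdges G S ⊆ inducedEdges G R := fun _ he =>
  let ⟨heG, heS⟩ := mem_inducedEdges.1 he
  mem_inducedEdges.2 ⟨heG, fun v hv => hSR (heS v hv)⟩

lemma IsDensest.sum_edgeProbOn_eq_card_sub_one (hS : IsDensest G S) (hSR : S ⊆ R)
    {μ : TreePMFOn G R} (hμ : IsFairOn μ) : ∑ e ∈ inducedEdges G S, edgeProbOn μ e = #S - 1 := by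
  have hne : S.Nonempty := card_pos.1 (zero_lt_one.trans hS.1.one_lt_card)
  refine le_antisymm (sum_edgeProbOn_inducedEdges_le μ hne) ?_
  refine le_of_mul_le_mul_right ?_ hS.1.density_pos
  calc (#S - 1) * density G S
      = ∑ e ∈ inducedEdges G S, 1 := by
        rw [mul_comm, hS.1.density_mul_card_sub_one, cast_card]
    _ ≤ ∑ e ∈ inducedEdges G S, edgeProbOn μ e * density G S :=
        sum_le_sum fun e he => hS.one_le_edgeProbOn_mul_density hμ (inducedEdges_mono hSR he)
    _ = (∑ e ∈ inducedEdges G S, edgeProbOn μ e) * density G S := (sum_mul _ _ _).symm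

lemma IsDensest.edgeProbOn_eq_inv_density (hS : IsDensest G S) (hSR : S ⊆ R)
    {μ : TreePMFOn G R} (hμ : IsFairOn μ) {e : Sym2 α} (he : e ∈ inducedEdges G S) :
    edgeProbOn μ e = (density G S)⁻¹ := by
  have hsum : ∑ e ∈ inducedEdges G S, 1 = ∑ e ∈ inducedEdges G S, edgeProbOn μ e * density G S := by
    rw [← sum_mul, hS.sum_edgeProbOn_eq_card_sub_one hSR hμ, mul_comm,
      hS.1.density_mul_card_sub_one, cast_card]
  exact eq_inv_of_mul_eq_one_left ((sum_eq_sum_iff_of_le fun e he =>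
    hS.one_le_edgeProbOn_mul_density hμ (inducedEdges_mono hSR he)).1 hsum e he).symm

lemma IsDensest.isSpanningTreeOn_edgesWithin (hS : IsDensest G S) (hSR : S ⊆ R)
    {μ : TreePMFOn G R} (hμ : IsFairOn μ) {T : Finset (Sym2 α)} (hT : μ.toFun T ≠ 0) :
    IsSpanningTreeOn G S (edgesWithin T S) :=
  isSpanningTreeOn_edgesWithin_of_sum_edgeProbOn_eq μ
    (card_pos.1 (zero_lt_one.trans hS.1.one_lt_card)) (hS.sum_edgeProbOn_eq_card_sub_one hSR hμ) hT

lemma edgeProbOn_map_edgesWithin (μ : TreePMFOn G R)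
    (h : ∀ T, μ.toFun T ≠ 0 → IsSpanningTreeOn G S (edgesWithin T S)) {e : Sym2 α}
    (he : e ∈ inducedEdges G S) : edgeProbOn (μ.map (edgesWithin · S) h) e = edgeProbOn μ e := by
  have hmem (T : Finset (Sym2 α)) : e ∈ edgesWithin T S ↔ e ∈ T := by
    rw [mem_edgesWithin, and_iff_left (mem_inducedEdges.1 he).2]
  simp only [edgeProbOn_eq_expect, TreePMFOn.expect_map, hmem]

end Densest

theorem restriction_is_fair_of_minimalDensest_general {α : Type*} [Fintype α] [DecidableEq α]
    {G : SimpleGraph α} {R S : Finset α} (hS : IsDensest G S) (hSR : S ⊆ R)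
    {T : Finset (Sym2 α)} (hT : IsFairTreeOn G R T) : IsFairTreeOn G S (edgesWithin T S) := by
  obtain ⟨μ, hμ, hμT⟩ := hT
  have htree := fun T => hS.isSpanningTreeOn_edgesWithin hSR hμ (T := T)
  have hconst : ∀ e ∈ inducedEdges G S,
      edgeProbOn (μ.map (edgesWithin · S) htree) e = (density G S)⁻¹ := fun e he => by
    rw [edgeProbOn_map_edgesWithin μ htree he, hS.edgeProbOn_eq_inv_density hSR hμ he]
  have hpos : 0 < μ.toFun T := (μ.nonneg T).lt_of_ne' hμT
  exact ⟨μ.map (edgesWithin · S) htree, isFairOn_of_edgeProbOn_eq_const hconst,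
    (hpos.trans_le (μ.toFun_le_toFun_map htree T)).ne'⟩

/-- If `H₀` (induced on `S`) is a minimal 1-densest subgraph of the finite
connected simple graph `G` with `H₀ ≠ G`, then for every fair tree `γ` of `G`, the
restriction `γ ∩ E(H₀)` is a fair spanning tree of the graph `H₀`. -/
theorem restriction_is_fair_of_minimalDensest
    {V : Type*} [Fintype V] [DecidableEq V] (G : SimpleGraph V) (hG : G.Connected)
    (S : Finset V) (hmin : IsMinimalDensest G S) (hne : S ≠ Finset.univ) :
    ∀ T : Finset (Sym2 V), IsFairTreeOn G Finset.univ T →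
      IsFairTreeOn G S (T.filter fun e => ∀ v ∈ e, v ∈ S) := by
  intro T hT
  convert restriction_is_fair_of_minimalDensest_general hmin.1 (Finset.subset_univ S) hT
  ext e
  rw [Finset.mem_filter, mem_edgesWithin]
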